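/- Let Q₂(2k) denote the number of Goldbach partitions of the even integer 2k, and let Gₙ be half the even number partitioned by a uniformly random Goldbach partition from the set of all Goldbach partitions of even integers in (4, 2n]. Then lim_{n→∞} Var(Gₙ)/n² = 1/18; equivalently, (Σ_{2<k≤n} k²·Q₂(2k))/(n² Σ_{2<k≤n} Q₂(2k)) − ((Σ_{2<k≤n} k·Q₂(2k))/(n Σ_{2<k≤n} Q₂(2k)))² → 1/18 as n → ∞. -/

import Mathlib

/-!
Since `-ζ'/ζ` has no singularity on `1 ≤ re s` besides a simple pole at `1`, the Wiener–Ikehara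
theorem gives the prime number theorem, so the number `π n` of odd primes up to `n` is regularly
varying of index `1`. Then `π (n - k) / π n` tends to `1 - k / n` uniformly in `k ≤ n`, and the
number `∑ k ≤ n, 1_{k odd prime} * π (n - k)` of pairs of odd primes with `p + q ≤ n` is
asymptotically `π n ^ 2 / 2`, hence regularly varying of index `2`. Thus `Gₙ / n` has
asymptotically the distribution function `t ^ 2` on `[0, 1]`, with moments `2 / (2 + j)` and
variance `2 / 4 - (2 / 3) ^ 2 = 1 / 18`. The pairs with `p = q` are negligible, so it does not
matter whether partitions are ordered.
-/

open Filter Topology Asymptotics MeasureTheory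

/-- `Q2 k` is the number of Goldbach partitions of `2*k`, i.e. the number of
unordered pairs `{p, q}` of odd primes with `p + q = 2*k`. -/
def Q2 (k : ℕ) : ℕ :=
  ((Finset.range (2 * k + 1) ×ˢ Finset.range (2 * k + 1)).filter
    (fun pq => pq.1.Prime ∧ pq.2.Prime ∧ Odd pq.1 ∧ Odd pq.2 ∧
      pq.1 ≤ pq.2 ∧ pq.1 + pq.2 = 2 * k)).card

/-- `fOdd z = Σ_{p odd prime} z^p`. -/
noncomputable def fOdd (z : ℝ) : ℝ := ∑' p : ℕ, if p.Prime ∧ Odd p then z ^ p else 0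

/-- `fOdd' z = Σ_{p odd prime} p * z^(p-1)`, the derivative of `fOdd` on `(0,1)`. -/
noncomputable def fOdd' (z : ℝ) : ℝ :=
  ∑' p : ℕ, if p.Prime ∧ Odd p then (p : ℝ) * z ^ (p - 1) else 0

/-- `fOdd'' z = Σ_{p odd prime} p * (p-1) * z^(p-2)`, the second derivative of `fOdd` on `(0,1)`. -/
noncomputable def fOdd'' (z : ℝ) : ℝ :=
  ∑' p : ℕ, if p.Prime ∧ Odd p then (p : ℝ) * ((p : ℝ) - 1) * z ^ (p - 2) else 0

/-- The prime-counting function at a real argument: the number of primes `≤ y`. -/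
noncomputable def primePi (y : ℝ) : ℕ := Nat.primeCounting ⌊y⌋₊

open FourierTransform
open Finset.HasAntidiagonal (antidiagonal mem_antidiagonal)

section LaplaceTransform

/-- `G` is a continuous extension to the closed half-plane `0 ≤ re s` of the Laplace transform of
`g`, the latter being taken over the half-line `Ioi 0`. -/
structure IsLaplaceExtension (G : ℂ → ℂ) (g : ℝ → ℂ) : Prop where
  continuousOn : ContinuousOn G {s | 0 ≤ s.re}
  integral_eq : ∀ s : ℂ, 0 < s.re → ∫ u in Set.Ioi (0 : ℝ), Complex.exp (-s * u) * g u = G s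

theorem integral_fourier_mul_eq {f g : ℝ → ℂ} (hf : Integrable f) (hg : Integrable g) :
    ∫ u, 𝓕 f u * g u = ∫ t, f t * 𝓕 g t := by
  simpa using! VectorFourier.integral_fourierIntegral_smul_eq_flip (L := innerₗ ℝ)
    Real.continuous_fourierChar continuous_inner hf hg

theorem fourier_exp_mul (χ : ℝ → ℂ) (v u : ℝ) :
    𝓕 (fun t : ℝ => Complex.exp (2 * Real.pi * Complex.I * t * v) * χ t) u = 𝓕 χ (u - v) := by
  simp only [Real.fourier_real_eq_integral_exp_smul, smul_eq_mul, ← mul_assoc, ← Complex.exp_add]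
  congr! 4
  push_cast
  ring

variable {g : ℝ → ℂ} {G : ℂ → ℂ} {χ : ℝ → ℂ} {M : ℝ}

theorem integrableOn_exp_neg_mul_mul (hg : Measurable g) (hM : ∀ u, ‖g u‖ ≤ M) {s : ℂ}
    (hs : 0 < s.re) : IntegrableOn (fun u : ℝ => Complex.exp (-s * u) * g u) (Set.Ioi 0) :=
  (integrableOn_exp_mul_complex_Ioi (a := -s) (by simpa using hs) 0).mul_bdd (c := M)
    hg.aestronglyMeasurable (.of_forall hM)

theorem IsLaplaceExtension.fourier_indicator_eq (hG : IsLaplaceExtension G g) {δ : ℝ} (hδ : 0 < δ)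
    (t : ℝ) :
    𝓕 ((Set.Ioi (0 : ℝ)).indicator fun u : ℝ => Complex.exp (-δ * u) * g u) t =
      G (δ + 2 * Real.pi * Complex.I * t) := by
  rw [← hG.integral_eq _ (by simpa using hδ), Real.fourier_real_eq_integral_exp_smul,
    ← integral_indicator measurableSet_Ioi]
  congr 1 with u
  rw [← Set.indicator_const_smul_apply, Set.indicator_apply, Set.indicator_apply]
  congr 1
  rw [smul_eq_mul, ← mul_assoc, ← Complex.exp_add]
  congr 2
  push_cast
  ring

theorem IsLaplaceExtension.setIntegral_fourier_mul_exp_eq (hG : IsLaplaceExtension G g)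
    (hg : Measurable g) (hM : ∀ u, ‖g u‖ ≤ M) (hχ : Integrable χ) {δ : ℝ} (hδ : 0 < δ) :
    ∫ u in Set.Ioi (0 : ℝ), 𝓕 χ u * (Complex.exp (-δ * u) * g u) =
      ∫ t : ℝ, χ t * G (δ + 2 * Real.pi * Complex.I * t) := by
  have hint : Integrable ((Set.Ioi (0 : ℝ)).indicator fun u : ℝ => Complex.exp (-δ * u) * g u) :=
    (integrableOn_exp_neg_mul_mul hg hM (by simpa using hδ)).integrable_indicator measurableSet_Ioi
  simp_rw [← hG.fourier_indicator_eq hδ, ← integral_fourier_mul_eq hχ hint,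
    ← integral_indicator measurableSet_Ioi, ← Set.indicator_mul_right]

theorem IsLaplaceExtension.setIntegral_fourier_mul_eq (hG : IsLaplaceExtension G g)
    (hg : Measurable g) (hM : ∀ u, ‖g u‖ ≤ M) (hχ : Continuous χ) (hχs : HasCompactSupport χ)
    (hχF : Integrable (𝓕 χ)) :
    ∫ u in Set.Ioi (0 : ℝ), 𝓕 χ u * g u = ∫ t : ℝ, χ t * G (2 * Real.pi * Complex.I * t) := by
  have hleft : Tendsto
      (fun δ : ℝ => ∫ u in Set.Ioi (0 : ℝ), 𝓕 χ u * (Complex.exp (-δ * u) * g u)) (𝓝[>] 0)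
      (𝓝 (∫ u in Set.Ioi (0 : ℝ), 𝓕 χ u * g u)) := by
    refine tendsto_integral_filter_of_dominated_convergence (fun u => ‖𝓕 χ u‖ * M) ?_ ?_
      (hχF.norm.mul_const M).integrableOn ?_
    · refine .of_forall fun δ => hχF.aestronglyMeasurable.restrict.mul ?_
      exact (by fun_prop : Measurable fun u : ℝ => Complex.exp (-δ * u) * g u).aestronglyMeasurable
    · filter_upwards [self_mem_nhdsWithin] with δ (hδ : 0 < δ)
      refine (ae_restrict_iff' measurableSet_Ioi).2 (.of_forall fun u (hu : 0 < u) => ?_)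
      have hexp : ‖Complex.exp (-δ * u)‖ ≤ 1 := by
        simpa [Complex.norm_exp] using (mul_pos hδ hu).le
      rw [norm_mul, norm_mul]
      gcongr
      exact (mul_le_of_le_one_left (norm_nonneg _) hexp).trans (hM u)
    · refine .of_forall fun u => (Continuous.tendsto' ?_ 0 _ (by simp)).mono_left inf_le_left
      fun_prop
  have hright : ContinuousOn (fun δ : ℝ => ∫ t : ℝ, χ t * G (δ + 2 * Real.pi * Complex.I * t))
      (Set.Ici 0) := by
    refine continuousOn_integral_of_compact_support hχs (.mul (by fun_prop) ?_) fun δ t _ ht => ?_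
    · exact hG.continuousOn.comp (by fun_prop) fun p hp => by simpa using hp.1
    · rw [image_eq_zero_of_notMem_tsupport ht, zero_mul]
  refine tendsto_nhds_unique hleft (Tendsto.congr' ?_
    (by simpa using ((hright 0 Set.self_mem_Ici).mono Set.Ioi_subset_Ici_self).tendsto))
  filter_upwards [self_mem_nhdsWithin] with δ hδ
  exact (hG.setIntegral_fourier_mul_exp_eq hg hM (hχ.integrable_of_hasCompactSupport hχs) hδ).symm

theorem IsLaplaceExtension.tendsto_setIntegral_fourier_sub_mul (hG : IsLaplaceExtension G g)
    (hg : Measurable g) (hM : ∀ u, ‖g u‖ ≤ M) (hχ : Continuous χ) (hχs : HasCompactSupport χ)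
    (hχF : Integrable (𝓕 χ)) :
    Tendsto (fun v : ℝ => ∫ u in Set.Ioi (0 : ℝ), 𝓕 χ (u - v) * g u) atTop (𝓝 0) := by
  have hRL := (Real.zero_at_infty_fourier fun t : ℝ => χ t * G (2 * Real.pi * Complex.I * t)).comp
    (tendsto_neg_atTop_atBot.mono_right atBot_le_cocompact)
  refine hRL.congr fun v => ?_
  have hshift := hG.setIntegral_fourier_mul_eq hg hM
    (χ := fun t : ℝ => Complex.exp (2 * Real.pi * Complex.I * t * v) * χ t) (by fun_prop)
    hχs.mul_left (by simpa only [funext (fourier_exp_mul χ v)] using hχF.comp_sub_right v)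
  simp only [fourier_exp_mul] at hshift
  rw [hshift, Function.comp_apply, Real.fourier_real_eq_integral_exp_smul]
  congr 1 with t
  rw [smul_eq_mul, ← mul_assoc (Complex.exp _)]
  congr 3
  push_cast
  ring

end LaplaceTransform

section BandLimited

/-- An integrable real function which is the Fourier transform of a continuous compactly supported
function. These are the smoothing kernels of the Tauberian argument: averages against them only
see the Laplace transform on a bounded piece of the imaginary axis. -/
structure IsBandLimited (K : ℝ → ℝ) : Prop where
  integrable : Integrable K
  exists_fourier_eq : ∃ χ : ℝ → ℂ, Continuous χ ∧ HasCompactSupport χ ∧ ∀ x, 𝓕 χ x = K x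

theorem IsBandLimited.const_mul {K : ℝ → ℝ} (hK : IsBandLimited K) (c : ℝ) :
    IsBandLimited fun x => c * K x := by
  obtain ⟨hint, χ, hχ, hχs, hF⟩ := hK
  refine ⟨hint.const_mul c, fun t => c * χ t, by fun_prop, hχs.mul_left, fun x => ?_⟩
  rw [Complex.ofReal_mul, ← hF, Real.fourier_real_eq, Real.fourier_real_eq,
    ← integral_const_mul]
  simp only [mul_smul_comm]

theorem IsBandLimited.comp_mul_left {K : ℝ → ℝ} (hK : IsBandLimited K) {l : ℝ} (hl : 0 < l) :
    IsBandLimited fun x => l * K (l * x) := by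
  obtain ⟨hint, χ, hχ, hχs, hF⟩ := hK
  refine ⟨(hint.comp_mul_left' hl.ne').const_mul l, fun t => χ (t / l), by fun_prop,
    hχs.comp_homeomorph (Homeomorph.mulRight₀ l⁻¹ (inv_ne_zero hl.ne')), fun x => ?_⟩
  have hsubst := Measure.integral_comp_div (fun t : ℝ => Real.fourierChar (-(t * (l * x))) • χ t) l
  rw [abs_of_pos hl, ← Real.fourier_real_eq, hF, Complex.real_smul] at hsubst
  rw [Complex.ofReal_mul, ← hsubst, Real.fourier_real_eq]
  congr! 4 with t
  field_simp

theorem fourier_conj_comp_neg (Φ : ℝ → ℂ) (x : ℝ) :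
    𝓕 (fun t => (starRingEnd ℂ) (Φ (-t))) x = (starRingEnd ℂ) (𝓕 Φ x) := by
  rw [Real.fourier_real_eq_integral_exp_smul, Real.fourier_real_eq_integral_exp_smul,
    ← integral_conj, ← integral_neg_eq_self]
  congr 1 with t
  simp [← Complex.exp_conj, map_ofNat]

theorem isBandLimited_normSq_fourier {Φ : ℝ → ℂ} (hΦ : Continuous Φ) (hΦs : HasCompactSupport Φ)
    (hF : MemLp (𝓕 Φ) 2) : IsBandLimited fun x => Complex.normSq (𝓕 Φ x) := by
  have hc : Continuous fun t => (starRingEnd ℂ) (Φ (-t)) := by fun_prop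
  have hs : HasCompactSupport fun t => (starRingEnd ℂ) (Φ (-t)) :=
    (hΦs.comp_homeomorph (Homeomorph.neg ℝ)).comp_left (map_zero _)
  have hint : Integrable Φ := hΦ.integrable_of_hasCompactSupport hΦs
  let χ : ℝ → ℂ := convolution Φ (fun t => (starRingEnd ℂ) (Φ (-t))) (ContinuousLinearMap.mul ℂ ℂ)
    volume
  have hχ : Continuous χ := hs.continuous_convolution_right _ hint.locallyIntegrable hc
  have hχs : HasCompactSupport χ := hΦs.convolution _ hs
  refine ⟨?_, χ, hχ, hχs, fun x => ?_⟩
  · simpa only [Complex.normSq_eq_norm_sq] using hF.integrable_norm_pow two_ne_zero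
  · rw [Real.fourier_mul_convolution_eq hint (hc.integrable_of_hasCompactSupport hs),
      fourier_conj_comp_neg, Complex.mul_conj]

theorem exists_isBandLimited_nonneg :
    ∃ K, IsBandLimited K ∧ (∀ x, 0 ≤ K x) ∧ ∫ x, K x = 1 := by
  let f : ContDiffBump (0 : ℝ) := ⟨1, 2, by norm_num, by norm_num⟩
  let Φ : ℝ → ℂ := fun x => (f x : ℂ)
  have hΦ : ContDiff ℝ (⊤ : ℕ∞) Φ := Complex.ofRealCLM.contDiff.comp f.contDiff
  have hΦs : HasCompactSupport Φ := f.hasCompactSupport.comp_left Complex.ofReal_zero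
  let S : SchwartzMap ℝ ℂ := 𝓕 (hΦs.toSchwartzMap hΦ)
  have hS : 𝓕 Φ = S := (SchwartzMap.fourier_coe (hΦs.toSchwartzMap hΦ)).symm
  have hK : IsBandLimited fun x => Complex.normSq (𝓕 Φ x) :=
    isBandLimited_normSq_fourier hΦ.continuous hΦs (hS ▸ S.memLp 2 volume)
  have hzero : 𝓕 Φ 0 = ((∫ x, f x : ℝ) : ℂ) := by
    rw [Real.fourier_real_eq]
    simpa only [mul_zero, neg_zero, AddChar.map_zero_eq_one, one_smul] using integral_complex_ofReal
  have hpos : 0 < ∫ x, Complex.normSq (𝓕 Φ x) := by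
    refine integral_pos_of_integrable_nonneg_nonzero (x := 0) ?_ hK.integrable
      (fun x => Complex.normSq_nonneg _) ?_
    · exact Complex.continuous_normSq.comp (hS ▸ S.continuous)
    · simpa [hzero] using f.integral_pos.ne'
  refine ⟨_, hK.const_mul (∫ x, Complex.normSq (𝓕 Φ x))⁻¹, fun x => ?_, ?_⟩
  · exact mul_nonneg (inv_nonneg.2 hpos.le) (Complex.normSq_nonneg _)
  · rw [integral_const_mul, inv_mul_cancel₀ hpos.ne']

theorem exists_isBandLimited_concentrated {ε : ℝ} (hε : 0 < ε) :
    ∃ K, IsBandLimited K ∧ (∀ x, 0 ≤ K x) ∧ ∫ x, K x = 1 ∧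
      1 - ε < ∫ x in Set.Icc (-ε) ε, K x := by
  obtain ⟨K, hK, hK0, hK1⟩ := exists_isBandLimited_nonneg
  have hlim : Tendsto (fun X : ℝ => ∫ x in Set.Icc (-X) X, K x) atTop (𝓝 1) := hK1 ▸
    (aecover_Icc tendsto_neg_atTop_atBot tendsto_id).integral_tendsto_of_countably_generated
      hK.integrable
  obtain ⟨X, hX, hX0⟩ :=
    ((hlim.eventually_const_lt (sub_lt_self 1 hε)).and (eventually_gt_atTop 0)).exists
  have hl : 0 < X / ε := div_pos hX0 hε
  refine ⟨_, hK.comp_mul_left hl, fun x => mul_nonneg hl.le (hK0 _), ?_, ?_⟩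
  · rw [integral_const_mul, Measure.integral_comp_mul_left, hK1, abs_of_pos (inv_pos.2 hl),
      smul_eq_mul, mul_one, mul_inv_cancel₀ hl.ne']
  · rw [integral_const_mul, integral_Icc_eq_integral_Ioc, ← intervalIntegral.integral_of_le
      (by linarith), intervalIntegral.mul_integral_comp_mul_left, mul_neg, div_mul_cancel₀ X hε.ne',
      intervalIntegral.integral_of_le (by linarith), ← integral_Icc_eq_integral_Ioc]
    exact hX

end BandLimited

section Tauberian

variable {h K : ℝ → ℝ} {G : ℂ → ℂ} {M c ε : ℝ}

theorem tendsto_integral_indicator_Iic_add_mul (hmeas : Measurable h) (hM : ∀ u, |h u| ≤ M)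
    (hK : Integrable K) :
    Tendsto (fun v => ∫ x, (Set.Iic 0).indicator h (v + x) * K x) atTop (𝓝 0) := by
  suffices Tendsto (fun v => ∫ x, (Set.Iic 0).indicator h (v + x) * K x) atTop
      (𝓝 (∫ _ : ℝ, (0 : ℝ))) by rwa [integral_zero] at this
  have hmeas' : Measurable ((Set.Iic 0).indicator h) := hmeas.indicator measurableSet_Iic
  refine tendsto_integral_filter_of_dominated_convergence (fun x => M * |K x|)
    (.of_forall fun v => ?_) (.of_forall fun v => .of_forall fun x => ?_)
    (hK.abs.const_mul M) (.of_forall fun x => ?_)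
  · exact (by fun_prop : Measurable fun x => (Set.Iic 0).indicator h (v + x)).aestronglyMeasurable
      |>.mul hK.aestronglyMeasurable
  · rw [norm_mul, Real.norm_eq_abs (K x)]
    gcongr
    exact (norm_indicator_le_norm_self h _).trans (hM _)
  · refine tendsto_const_nhds.congr' ?_
    filter_upwards [eventually_gt_atTop (-x)] with v hv
    rw [Set.indicator_of_notMem (by simpa using by linarith), zero_mul]

theorem IsBandLimited.tendsto_integral_add_mul (hK : IsBandLimited K) (hmeas : Measurable h)
    (hM : ∀ u, |h u| ≤ M) (hG : IsLaplaceExtension G fun u => (h u : ℂ)) :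
    Tendsto (fun v => ∫ x, h (v + x) * K x) atTop (𝓝 0) := by
  obtain ⟨hint, χ, hχ, hχs, hF⟩ := hK
  have hpos : Tendsto (fun v => ∫ u in Set.Ioi 0, h u * K (u - v)) atTop (𝓝 0) := by
    have hlim := hG.tendsto_setIntegral_fourier_sub_mul (by fun_prop) (by simpa using hM) hχ hχs
      (by rw [funext hF]; exact hint.ofReal)
    simp_rw [hF, ← Complex.ofReal_mul, integral_complex_ofReal, mul_comm (K _)] at hlim
    rwa [← Complex.ofReal_zero, tendsto_ofReal_iff] at hlim
  have hadd := hpos.add (tendsto_integral_indicator_Iic_add_mul hmeas hM hint)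
  rw [add_zero] at hadd
  refine hadd.congr fun v => ?_
  have hK' : Integrable fun u => h u * K (u - v) :=
    (hint.comp_sub_right v).bdd_mul hmeas.aestronglyMeasurable (.of_forall hM)
  have hsubst (f : ℝ → ℝ) : ∫ x, f (v + x) * K x = ∫ u, f u * K (u - v) := by
    rw [← integral_add_left_eq_self (fun u => f u * K (u - v)) v]
    simp only [add_sub_cancel_left]
  have hind (u : ℝ) : (Set.Iic 0).indicator h u * K (u - v) =
      (Set.Iic 0).indicator (fun u => h u * K (u - v)) u :=
    (Set.indicator_mul_left _ h fun u => K (u - v)).symm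
  rw [hsubst, hsubst, integral_congr_ae (.of_forall hind), integral_indicator measurableSet_Iic,
    ← Set.compl_Ioi, integral_add_compl measurableSet_Ioi hK']

theorem integrable_add_mul (hmeas : Measurable h) (hM : ∀ u, |h u| ≤ M) (hK : Integrable K)
    (v : ℝ) : Integrable fun x => h (v + x) * K x :=
  hK.bdd_mul (hmeas.comp (measurable_const_add v)).aestronglyMeasurable (.of_forall fun _ => hM _)

theorem IsBandLimited.tendsto_integral_add_mul_of_sub (hK : IsBandLimited K)
    (hK1 : ∫ x, K x = 1) (hmeas : Measurable h) (hM : ∀ u, |h u| ≤ M)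
    (hG : IsLaplaceExtension G fun u => ((h u - c : ℝ) : ℂ)) :
    Tendsto (fun v => ∫ x, h (v + x) * K x) atTop (𝓝 c) := by
  have hlim := (hK.tendsto_integral_add_mul (hmeas.sub_const c) (M := M + |c|)
    (fun u => (abs_sub _ _).trans (by gcongr; exact hM u)) hG).add_const c
  rw [zero_add] at hlim
  refine hlim.congr fun v => ?_
  simp_rw [sub_mul]
  rw [integral_sub (integrable_add_mul hmeas hM hK.integrable v) (hK.integrable.const_mul c),
    integral_const_mul, hK1]
  ring

theorem le_mul_exp_sub_of_monotone (hmono : Monotone fun u => h u * Real.exp u) {a b : ℝ}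
    (hab : a ≤ b) : h a ≤ h b * Real.exp (b - a) := by
  rw [Real.exp_sub, ← mul_div_assoc, le_div_iff₀ (Real.exp_pos a)]
  exact hmono hab

theorem mul_setIntegral_le_integral_add_mul (hmeas : Measurable h) (h0 : ∀ u, 0 ≤ h u)
    (hM : ∀ u, |h u| ≤ M) (hmono : Monotone fun u => h u * Real.exp u) (hK : Integrable K)
    (hK0 : ∀ x, 0 ≤ K x) (v : ℝ) :
    h v * Real.exp (-(2 * ε)) * ∫ x in Set.Icc (-ε) ε, K x ≤ ∫ x, h (v + ε + x) * K x := by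
  have hint := integrable_add_mul hmeas hM hK (v + ε)
  rw [← integral_const_mul]
  refine (setIntegral_mono_on (hK.integrableOn.const_mul _) hint.integrableOn measurableSet_Icc
    fun x hx => mul_le_mul_of_nonneg_right ?_ (hK0 x)).trans
    (setIntegral_le_integral hint (.of_forall fun x => mul_nonneg (h0 _) (hK0 x)))
  calc h v * Real.exp (-(2 * ε))
      ≤ h (v + ε + x) * Real.exp (v + ε + x - v) * Real.exp (-(2 * ε)) := by
        gcongr
        exact le_mul_exp_sub_of_monotone hmono (by linarith [hx.1])
    _ = h (v + ε + x) * Real.exp (x - ε) := by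
        rw [mul_assoc, ← Real.exp_add]
        ring_nf
    _ ≤ h (v + ε + x) :=
        mul_le_of_le_one_right (h0 _) (Real.exp_le_one_iff.2 (by linarith [hx.2]))

theorem integral_add_mul_le (hmeas : Measurable h) (h0 : ∀ u, 0 ≤ h u) (hM : ∀ u, |h u| ≤ M)
    (hmono : Monotone fun u => h u * Real.exp u) (hK : Integrable K) (hK0 : ∀ x, 0 ≤ K x)
    (v : ℝ) : ∫ x, h (v - ε + x) * K x ≤
      h v * Real.exp (2 * ε) * (∫ x in Set.Icc (-ε) ε, K x) +
        M * ∫ x in (Set.Icc (-ε) ε)ᶜ, K x := by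
  have hint := integrable_add_mul hmeas hM hK (v - ε)
  rw [← integral_add_compl measurableSet_Icc hint, ← integral_const_mul, ← integral_const_mul]
  refine add_le_add
    (setIntegral_mono_on hint.integrableOn (hK.integrableOn.const_mul _) measurableSet_Icc
      fun x hx => mul_le_mul_of_nonneg_right ?_ (hK0 x))
    (setIntegral_mono_on hint.integrableOn (hK.integrableOn.const_mul _) measurableSet_Icc.compl
      fun x _ => mul_le_mul_of_nonneg_right ((le_abs_self _).trans (hM _)) (hK0 x))
  refine (le_mul_exp_sub_of_monotone hmono (by linarith [hx.2] : v - ε + x ≤ v)).trans ?_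
  exact mul_le_mul_of_nonneg_left (Real.exp_le_exp.2 (by linarith [hx.1])) (h0 v)

theorem eventually_mul_exp_le_and_le_mul_exp (hmeas : Measurable h) (h0 : ∀ u, 0 ≤ h u)
    (hM : ∀ u, |h u| ≤ M) (hmono : Monotone fun u => h u * Real.exp u)
    (hG : IsLaplaceExtension G fun u => ((h u - c : ℝ) : ℂ)) (hε : 0 < ε) :
    ∀ᶠ v in atTop, h v * (Real.exp (-(2 * ε)) * (1 - ε)) ≤ c + ε ∧
      c - ε ≤ h v * Real.exp (2 * ε) + M * ε := by
  obtain ⟨K, hK, hK0, hK1, hKε⟩ := exists_isBandLimited_concentrated hε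
  have hlim := hK.tendsto_integral_add_mul_of_sub hK1 hmeas hM hG
  have hcompl := integral_add_compl (measurableSet_Icc (a := -ε) (b := ε)) hK.integrable
  rw [hK1] at hcompl
  have hle : ∫ x in Set.Icc (-ε) ε, K x ≤ 1 :=
    hK1 ▸ setIntegral_le_integral hK.integrable (.of_forall hK0)
  have hM0 : 0 ≤ M := (abs_nonneg _).trans (hM 0)
  filter_upwards [(hlim.comp (tendsto_atTop_add_const_right atTop ε tendsto_id)).eventually_le_const
      (lt_add_of_pos_right c hε),
    (hlim.comp (tendsto_atTop_add_const_right atTop (-ε) tendsto_id)).eventually_const_le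
      (sub_lt_self c hε)] with v hup hlow
  simp only [Function.comp_apply, id, ← sub_eq_add_neg] at hup hlow
  constructor
  · refine le_trans ?_ ((mul_setIntegral_le_integral_add_mul hmeas h0 hM hmono hK.integrable hK0
      v).trans hup)
    rw [← mul_assoc]
    exact mul_le_mul_of_nonneg_left hKε.le (mul_nonneg (h0 v) (Real.exp_pos _).le)
  · refine hlow.trans ((integral_add_mul_le hmeas h0 hM hmono hK.integrable hK0 v).trans ?_)
    refine add_le_add (mul_le_of_le_one_right (mul_nonneg (h0 v) (Real.exp_pos _).le) hle) ?_
    exact mul_le_mul_of_nonneg_left (by linarith) hM0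

theorem tendsto_of_isLaplaceExtension_sub (hmeas : Measurable h) (h0 : ∀ u, 0 ≤ h u)
    (hM : ∀ u, |h u| ≤ M) (hmono : Monotone fun u => h u * Real.exp u)
    (hG : IsLaplaceExtension G fun u => ((h u - c : ℝ) : ℂ)) : Tendsto h atTop (𝓝 c) := by
  have hev (ε : ℝ) (hε : 0 < ε) := eventually_mul_exp_le_and_le_mul_exp hmeas h0 hM hmono hG hε
  refine tendsto_order.2 ⟨fun a ha => ?_, fun a ha => ?_⟩
  · have hlim : Tendsto (fun ε => a * Real.exp (2 * ε) + M * ε - (c - ε)) (𝓝[>] 0) (𝓝 (a - c)) :=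
      (Continuous.tendsto' (by fun_prop) 0 _ (by simp)).mono_left inf_le_left
    obtain ⟨ε, hlt, hε : 0 < ε⟩ :=
      ((hlim.eventually_lt_const (sub_neg.2 ha)).and self_mem_nhdsWithin).exists
    filter_upwards [hev ε hε] with v hv
    exact lt_of_mul_lt_mul_right (by linarith [hv.2]) (Real.exp_pos (2 * ε)).le
  · have hlim : Tendsto (fun ε => a * (Real.exp (-(2 * ε)) * (1 - ε)) - (c + ε)) (𝓝[>] 0)
        (𝓝 (a - c)) := (Continuous.tendsto' (by fun_prop) 0 _ (by simp)).mono_left inf_le_left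
    obtain ⟨ε, hlt, hε⟩ := ((hlim.eventually_const_lt (sub_pos.2 ha)).and
      (Ioo_mem_nhdsGT one_pos)).exists
    filter_upwards [hev ε hε.1] with v hv
    exact lt_of_mul_lt_mul_right (by linarith [hv.1])
      (mul_pos (Real.exp_pos (-(2 * ε))) (sub_pos.2 hε.2)).le

end Tauberian

section WienerIkehara

theorem setIntegral_Ioi_one_mul_cpow (A : ℝ → ℂ) (s : ℂ) :
    ∫ t in Set.Ioi (1 : ℝ), A t * (t : ℂ) ^ (-(s + 1)) =
      ∫ u in Set.Ioi (0 : ℝ), Complex.exp (-s * u) * A (Real.exp u) := by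
  rw [← Real.exp_zero, ← Real.image_exp_Ioi,
    integral_image_eq_integral_abs_deriv_smul measurableSet_Ioi
      (fun x _ => (Real.hasDerivAt_exp x).hasDerivWithinAt) Real.exp_injective.injOn]
  refine setIntegral_congr_fun measurableSet_Ioi fun u _ => ?_
  have hexp : Complex.exp u * Complex.exp (u * -(s + 1)) = Complex.exp (-s * u) := by
    rw [← Complex.exp_add]
    ring_nf
  simp only [Real.abs_exp, Complex.real_smul]
  rw [Complex.cpow_def_of_ne_zero (by simp), ← Complex.ofReal_log (Real.exp_pos u).le,
    Real.log_exp, Complex.ofReal_exp]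
  linear_combination A (Real.exp u) * hexp

variable {f : ℕ → ℝ} {F : ℂ → ℂ} {c C : ℝ}

theorem LSeries_eq_mul_integral_exp (hf : ∀ n, 0 ≤ f n)
    (hC : ∀ n : ℕ, ∑ k ∈ Finset.Icc 1 n, f k ≤ C * n) {s : ℂ} (hs : 0 < s.re) :
    LSeries (fun n => (f n : ℂ)) (s + 1) = (s + 1) * ∫ u in Set.Ioi (0 : ℝ),
      Complex.exp (-s * u) *
        ((∑ k ∈ Finset.Icc 1 ⌊Real.exp u⌋₊, f k) / Real.exp u : ℝ) := by
  have hO : (fun n => ∑ k ∈ Finset.Icc 1 n, f k) =O[atTop] fun n => (n : ℝ) ^ (1 : ℝ) :=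
    .of_bound C <| .of_forall fun n => by
      rw [Real.rpow_one, Real.norm_of_nonneg (Finset.sum_nonneg fun k _ => hf k),
        Real.norm_of_nonneg n.cast_nonneg]
      exact hC n
  rw [LSeries_eq_mul_integral_of_nonneg f zero_le_one (by simpa using hs) hO hf,
    setIntegral_Ioi_one_mul_cpow]
  congr 1
  refine setIntegral_congr_fun measurableSet_Ioi fun u _ => ?_
  have hexp : Complex.exp (-(s + 1) * u) = Complex.exp (-s * u) / Complex.exp u := by
    rw [← Complex.exp_sub]
    ring_nf
  push_cast
  rw [hexp]
  ring

theorem sum_Icc_floor_div_le (hC0 : 0 ≤ C) (hC : ∀ n : ℕ, ∑ k ∈ Finset.Icc 1 n, f k ≤ C * n)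
    {x : ℝ} (hx : 0 < x) : (∑ k ∈ Finset.Icc 1 ⌊x⌋₊, f k) / x ≤ C := by
  rw [div_le_iff₀ hx]
  exact (hC _).trans (mul_le_mul_of_nonneg_left (Nat.floor_le hx.le) hC0)

theorem monotone_sum_Icc_floor (hf : ∀ n, 0 ≤ f n) :
    Monotone fun x : ℝ => ∑ k ∈ Finset.Icc 1 ⌊x⌋₊, f k := fun _ _ hxy =>
  Finset.sum_le_sum_of_subset_of_nonneg (Finset.Icc_subset_Icc_right (Nat.floor_le_floor hxy))
    fun k _ _ => hf k

theorem isLaplaceExtension_sub_const {G : ℂ → ℂ} {h : ℝ → ℝ} {M : ℝ} (hmeas : Measurable h)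
    (hM : ∀ u, |h u| ≤ M) (hG : ContinuousOn G {s | 0 ≤ s.re})
    (hGh : ∀ s : ℂ, 0 < s.re →
      (∫ u in Set.Ioi (0 : ℝ), Complex.exp (-s * u) * (h u : ℂ)) - c / s = G s) :
    IsLaplaceExtension G fun u => ((h u - c : ℝ) : ℂ) where
  continuousOn := hG
  integral_eq s hs := by
    have hs' : (-s).re < 0 := by simpa using hs
    simp only [Complex.ofReal_sub, mul_sub]
    rw [← hGh s hs, integral_sub (integrableOn_exp_neg_mul_mul
      hmeas.complex_ofReal (M := M) (by simpa using hM) hs)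
      ((integrableOn_exp_mul_complex_Ioi hs' 0).mul_const _),
      integral_mul_const, integral_exp_mul_complex_Ioi hs']
    simp [div_eq_inv_mul]

/-- The Wiener–Ikehara theorem. -/
theorem tendsto_sum_Icc_floor_div (hf : ∀ n, 0 ≤ f n)
    (hC : ∀ n : ℕ, ∑ k ∈ Finset.Icc 1 n, f k ≤ C * n)
    (hF : ContinuousOn F {s | 1 ≤ s.re})
    (hFL : ∀ s, 1 < s.re → F s = LSeries (fun n => (f n : ℂ)) s - c / (s - 1)) :
    Tendsto (fun x : ℝ => (∑ k ∈ Finset.Icc 1 ⌊x⌋₊, f k) / x) atTop (𝓝 c) := by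
  have hC0 : 0 ≤ C := by simpa using (hf 1).trans (by simpa using hC 1)
  let h : ℝ → ℝ := fun u => (∑ k ∈ Finset.Icc 1 ⌊Real.exp u⌋₊, f k) / Real.exp u
  have hmeas : Measurable h :=
    ((monotone_sum_Icc_floor hf).measurable.comp Real.measurable_exp).div Real.measurable_exp
  have h0 (u : ℝ) : 0 ≤ h u := div_nonneg (Finset.sum_nonneg fun k _ => hf k) (Real.exp_pos u).le
  have hM (u : ℝ) : |h u| ≤ C := by
    rw [abs_of_nonneg (h0 u)]
    exact sum_Icc_floor_div_le hC0 hC (Real.exp_pos u)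
  have hmono : Monotone fun u => h u * Real.exp u := by
    simp only [h, div_mul_cancel₀ _ (Real.exp_ne_zero _)]
    exact (monotone_sum_Icc_floor hf).comp Real.exp_monotone
  have hne {s : ℂ} (hs : 0 ≤ s.re) : s + 1 ≠ 0 := fun h0 => by
    linarith [show s.re + 1 = 0 by simpa using congrArg Complex.re h0]
  have hext : IsLaplaceExtension (fun s => (F (s + 1) - c) / (s + 1))
      fun u => ((h u - c : ℝ) : ℂ) := by
    refine isLaplaceExtension_sub_const hmeas hM (ContinuousOn.div ((hF.comp (by fun_prop)
      fun s hs => by simpa using hs).sub continuousOn_const) (by fun_prop) fun s => hne)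
      fun s hs => ?_
    have hs0 : s ≠ 0 := fun h0 => by simp [h0] at hs
    rw [hFL (s + 1) (by simpa using hs), LSeries_eq_mul_integral_exp hf hC hs,
      add_sub_cancel_right]
    field_simp [hne hs.le]
    ring
  refine ((tendsto_of_isLaplaceExtension_sub hmeas h0 hM hmono hext).comp
    Real.tendsto_log_atTop).congr' ?_
  filter_upwards [eventually_gt_atTop 0] with x hx
  simp only [h, Function.comp_apply, Real.exp_log hx]

end WienerIkehara

section PrimeNumberTheorem

open ArithmeticFunction Chebyshev

theorem sum_Icc_vonMangoldt (x : ℝ) : ∑ k ∈ Finset.Icc 1 ⌊x⌋₊, vonMangoldt k = psi x := rfl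

/-- For the modulus `1`, the auxiliary function from Mathlib's proof of Dirichlet's theorem extends
`-ζ'/ζ s - 1 / (s - 1)` continuously to `1 ≤ re s`. -/
theorem LFunctionResidueClassAux_one_eq {s : ℂ} (hs : 1 < s.re) :
    vonMangoldt.LFunctionResidueClassAux (1 : ZMod 1) s =
      LSeries (fun n => (vonMangoldt n : ℂ)) s - (1 : ℝ) / (s - 1) := by
  have huniv (n : ℕ) : (n : ZMod 1) = 1 := Subsingleton.elim _ _
  rw [vonMangoldt.eqOn_LFunctionResidueClassAux isUnit_one hs]
  simp [Set.indicator, vonMangoldt.residueClass, huniv]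

theorem tendsto_psi_div : Tendsto (fun x => psi x / x) atTop (𝓝 1) :=
  tendsto_sum_Icc_floor_div (C := Real.log 4 + 4) (fun _ => vonMangoldt_nonneg)
    (fun n => by
      simpa only [← sum_Icc_vonMangoldt, Nat.floor_natCast] using
        psi_le_const_mul_self n.cast_nonneg)
    (vonMangoldt.continuousOn_LFunctionResidueClassAux 1)
    fun _ => LFunctionResidueClassAux_one_eq

theorem tendsto_theta_div : Tendsto (fun x => theta x / x) atTop (𝓝 1) := by
  have hsqrt : Tendsto (fun x : ℝ => √x * x⁻¹) atTop (𝓝 0) :=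
    Real.tendsto_sqrt_atTop.inv_tendsto_atTop.congr fun x => by
      rw [Pi.inv_apply, ← Real.sqrt_div_self, div_eq_mul_inv]
  have hlim := tendsto_psi_div.sub ((isBigO_psi_sub_theta_sqrt.mul
    (isBigO_refl (fun x : ℝ => x⁻¹) atTop)).trans_tendsto hsqrt)
  rw [sub_zero] at hlim
  refine hlim.congr fun x => ?_
  rw [Pi.sub_apply]
  ring

theorem tendsto_primeCounting_floor_mul_log_div :
    Tendsto (fun x : ℝ => Nat.primeCounting ⌊x⌋₊ * Real.log x / x) atTop (𝓝 1) := by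
  have hbound := primeCounting_sub_theta_div_log_isBigO.mul
    (isBigO_refl (fun x : ℝ => Real.log x / x) atTop)
  have hzero : Tendsto (fun x : ℝ => x / Real.log x ^ 2 * (Real.log x / x)) atTop (𝓝 0) := by
    refine Real.tendsto_log_atTop.inv_tendsto_atTop.congr' ?_
    filter_upwards [eventually_gt_atTop 1] with x hx
    have hlog := Real.log_pos hx
    simp only [Pi.inv_apply]
    field_simp
  have hlim := tendsto_theta_div.add (hbound.trans_tendsto hzero)
  rw [add_zero] at hlim
  refine hlim.congr' ?_
  filter_upwards [eventually_gt_atTop 1] with x hx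
  have hlog := Real.log_pos hx
  field_simp
  ring

theorem tendsto_primeCounting_mul_log_div :
    Tendsto (fun n : ℕ => Nat.primeCounting n * Real.log n / n) atTop (𝓝 1) := by
  simpa [Function.comp_def] using
    tendsto_primeCounting_floor_mul_log_div.comp tendsto_natCast_atTop_atTop

end PrimeNumberTheorem

section RegularVariation

/-- A sequence is regularly varying of index `ρ` when rescaling its argument by `t` multiplies it
asymptotically by `t ^ ρ`. Eventual non-vanishing is part of the notion, by the case `t = 1`. -/
def IsRegularlyVarying (A : ℕ → ℝ) (ρ : ℝ) : Prop :=
  ∀ ⦃t : ℝ⦄, 0 < t → Tendsto (fun n : ℕ => A ⌊t * n⌋₊ / A n) atTop (𝓝 (t ^ ρ))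

variable {A B : ℕ → ℝ} {ρ σ c : ℝ}

theorem IsRegularlyVarying.eventually_ne_zero (hA : IsRegularlyVarying A ρ) :
    ∀ᶠ n in atTop, A n ≠ 0 := by
  have hone := hA one_pos
  rw [Real.one_rpow] at hone
  filter_upwards [hone.eventually_ne one_ne_zero] with n hn hzero
  simp [hzero] at hn

theorem IsRegularlyVarying.mul (hA : IsRegularlyVarying A ρ) (hB : IsRegularlyVarying B σ) :
    IsRegularlyVarying (fun n => A n * B n) (ρ + σ) := fun t ht => by
  simpa only [mul_div_mul_comm, Real.rpow_add ht] using (hA ht).mul (hB ht)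

theorem IsRegularlyVarying.div (hA : IsRegularlyVarying A ρ) (hB : IsRegularlyVarying B σ) :
    IsRegularlyVarying (fun n => A n / B n) (ρ - σ) := fun t ht => by
  rw [Real.rpow_sub ht]
  exact ((hA ht).div (hB ht) (Real.rpow_pos_of_pos ht σ).ne').congr fun n =>
    div_div_div_comm _ _ _ _

theorem tendsto_floor_mul_natCast {t : ℝ} (ht : 0 < t) :
    Tendsto (fun n : ℕ => ⌊t * n⌋₊) atTop atTop :=
  tendsto_nat_floor_atTop.comp (tendsto_natCast_atTop_atTop.const_mul_atTop ht)

theorem IsRegularlyVarying.of_tendsto_div (hA : IsRegularlyVarying A ρ) (hc : c ≠ 0)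
    (hBA : Tendsto (fun n => B n / A n) atTop (𝓝 c)) : IsRegularlyVarying B ρ := fun t ht => by
  have hlim := ((hBA.comp (tendsto_floor_mul_natCast ht)).div hBA hc).mul (hA ht)
  rw [div_self hc, one_mul] at hlim
  refine hlim.congr' ?_
  filter_upwards [hA.eventually_ne_zero, (tendsto_floor_mul_natCast ht).eventually
    hA.eventually_ne_zero] with n hn hfloor
  simp only [Function.comp_apply, Pi.div_apply]
  field_simp

theorem tendsto_floor_mul_natCast_div {t : ℝ} (ht : 0 ≤ t) :
    Tendsto (fun n : ℕ => (⌊t * n⌋₊ : ℝ) / n) atTop (𝓝 t) :=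
  (tendsto_nat_floor_mul_div_atTop ht).comp tendsto_natCast_atTop_atTop

theorem isRegularlyVarying_natCast : IsRegularlyVarying (fun n => (n : ℝ)) 1 := fun t ht => by
  simpa only [Real.rpow_one] using tendsto_floor_mul_natCast_div ht.le

theorem isRegularlyVarying_log : IsRegularlyVarying (fun n => Real.log n) 0 := fun t ht => by
  have hlog : Tendsto (fun n : ℕ => Real.log n) atTop atTop :=
    Real.tendsto_log_atTop.comp tendsto_natCast_atTop_atTop
  have hlim := (((tendsto_floor_mul_natCast_div ht.le).log ht.ne').div_atTop hlog).const_add 1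
  rw [add_zero] at hlim
  rw [Real.rpow_zero]
  refine hlim.congr' ?_
  filter_upwards [hlog.eventually_gt_atTop 0, eventually_ne_atTop 0,
    (tendsto_floor_mul_natCast ht).eventually_ne_atTop 0] with n hn hn0 hfloor
  rw [Real.log_div (by exact_mod_cast hfloor) (by exact_mod_cast hn0)]
  field_simp
  ring

/-- The partial sums of `a`, including the terms of index `0` and `n`. -/
def partialSum (a : ℕ → ℝ) (n : ℕ) : ℝ := ∑ k ∈ Finset.range (n + 1), a k

variable {a b : ℕ → ℝ} {f : ℝ → ℝ}

theorem monotone_partialSum (ha : ∀ k, 0 ≤ a k) : Monotone (partialSum a) := fun _ _ hmn =>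
  Finset.sum_le_sum_of_subset_of_nonneg (Finset.range_subset_range.2 (by lia)) fun k _ _ => ha k

theorem partialSum_nonneg (ha : ∀ k, 0 ≤ a k) (n : ℕ) : 0 ≤ partialSum a n :=
  Finset.sum_nonneg fun k _ => ha k

theorem sum_comp_div_mul_eq (hf : ContDiff ℝ 1 f) (a : ℕ → ℝ) {n : ℕ} (hn : n ≠ 0) :
    ∑ k ∈ Finset.range (n + 1), f (k / n) * a k =
      f 1 * partialSum a n - ∫ u in (0 : ℝ)..1, deriv f u * partialSum a ⌊u * n⌋₊ := by
  have hn' : (n : ℝ) ≠ 0 := Nat.cast_ne_zero.2 hn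
  have hg : ContDiff ℝ 1 fun t : ℝ => f (t / n) := by fun_prop
  have hderiv : deriv (fun t : ℝ => f (t / n)) = fun t => deriv f (t / n) / n := funext fun t => by
    simpa only [div_eq_inv_mul, smul_eq_mul] using deriv_comp_mul_left (n : ℝ)⁻¹ f t
  have habel := sum_mul_eq_sub_integral_mul' a n (fun t _ => hg.differentiable one_ne_zero t)
    ((hg.continuous_deriv le_rfl).continuousOn.integrableOn_Icc)
  have hsubst := intervalIntegral.integral_comp_mul_right (a := 0) (b := 1)
    (fun t => deriv f (t / n) * partialSum a ⌊t⌋₊) hn'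
  simp only [mul_div_cancel_right₀ _ hn', zero_mul, one_mul] at hsubst
  rw [hsubst]
  simp only [← Nat.range_succ_eq_Icc_zero] at habel
  rw [habel, div_self hn', hderiv, intervalIntegral.integral_of_le n.cast_nonneg, smul_eq_mul,
    ← integral_const_mul]
  congr 2
  ext t
  simp only [partialSum]
  ring

theorem IsRegularlyVarying.tendsto_sum_comp_div_mul (hA : IsRegularlyVarying (partialSum a) ρ)
    (ha : ∀ k, 0 ≤ a k) (hf : ContDiff ℝ 1 f) :
    Tendsto (fun n : ℕ => (∑ k ∈ Finset.range (n + 1), f (k / n) * a k) / partialSum a n) atTop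
      (𝓝 (f 1 - ∫ u in (0 : ℝ)..1, deriv f u * u ^ ρ)) := by
  have hderiv : Continuous (deriv f) := hf.continuous_deriv le_rfl
  have hlim : Tendsto (fun n : ℕ => ∫ u in (0 : ℝ)..1,
      deriv f u * (partialSum a ⌊u * n⌋₊ / partialSum a n)) atTop
      (𝓝 (∫ u in (0 : ℝ)..1, deriv f u * u ^ ρ)) := by
    refine intervalIntegral.tendsto_integral_filter_of_dominated_convergence (fun u => |deriv f u|)
      (.of_forall fun n => ?_) (.of_forall fun n => .of_forall fun u hu => ?_)
      (hderiv.abs.intervalIntegrable _ _) (.of_forall fun u hu => ?_)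
    · have hfloor : Measurable fun u : ℝ => partialSum a ⌊u * n⌋₊ :=
        (measurable_of_countable (partialSum a)).comp
          (Nat.measurable_floor.comp (measurable_id.mul_const _))
      exact (hderiv.measurable.mul (hfloor.div_const _)).aestronglyMeasurable
    · rw [Set.uIoc_of_le zero_le_one] at hu
      have hle : ⌊u * n⌋₊ ≤ n := Nat.floor_le_of_le (mul_le_of_le_one_left n.cast_nonneg hu.2)
      have h0 := partialSum_nonneg ha
      rw [norm_mul, Real.norm_of_nonneg (div_nonneg (h0 _) (h0 _))]
      exact mul_le_of_le_one_right (norm_nonneg _)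
        (div_le_one_of_le₀ (monotone_partialSum ha hle) (h0 _))
    · rw [Set.uIoc_of_le zero_le_one] at hu
      exact (hA hu.1).const_mul _
  refine (hlim.const_sub (f 1)).congr' ?_
  filter_upwards [hA.eventually_ne_zero, eventually_ne_atTop 0] with n hn hn0
  rw [sum_comp_div_mul_eq hf a hn0, sub_div, mul_div_cancel_right₀ _ hn,
    ← intervalIntegral.integral_div]
  simp only [mul_div_assoc]

theorem one_sub_integral_deriv_pow_mul_rpow (hρ : 0 < ρ) (j : ℕ) :
    (1 : ℝ) ^ j - ∫ u in (0 : ℝ)..1, deriv (fun t => t ^ j) u * u ^ ρ = ρ / (ρ + j) := by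
  cases j with
  | zero => simp [hρ.ne']
  | succ j =>
    have hpow : ∫ u in (0 : ℝ)..1, deriv (fun t => t ^ (j + 1)) u * u ^ ρ =
        (j + 1) * ∫ u in (0 : ℝ)..1, u ^ (j + ρ) := by
      rw [← intervalIntegral.integral_const_mul]
      refine intervalIntegral.integral_congr fun u hu => ?_
      rw [Set.uIcc_of_le zero_le_one] at hu
      simp [Real.rpow_add_of_nonneg hu.1 j.cast_nonneg hρ.le, mul_assoc]
    rw [hpow, integral_rpow (.inl (by linarith [j.cast_nonneg (α := ℝ)])), Real.one_rpow,
      Real.zero_rpow (by positivity), Nat.cast_succ]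
    field_simp
    ring

theorem IsRegularlyVarying.tendsto_moment (hA : IsRegularlyVarying (partialSum a) ρ)
    (hρ : 0 < ρ) (ha : ∀ k, 0 ≤ a k) (j : ℕ) :
    Tendsto (fun n : ℕ => (∑ k ∈ Finset.range (n + 1), (k : ℝ) ^ j * a k) /
      ((n : ℝ) ^ j * partialSum a n)) atTop (𝓝 (ρ / (ρ + j))) := by
  have hpow : ContDiff ℝ 1 fun t : ℝ => t ^ j := contDiff_id.pow j
  rw [← one_sub_integral_deriv_pow_mul_rpow hρ j]
  refine (hA.tendsto_sum_comp_div_mul ha hpow).congr fun n => ?_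
  simp only [div_pow, div_mul_eq_mul_div, ← Finset.sum_div]
  rw [div_div]

end RegularVariation

section AddConvolution

/-- Pólya's theorem. -/
theorem tendstoUniformlyOn_Icc_of_monotoneOn {ι : Type*} {l : Filter ι} {F : ι → ℝ → ℝ}
    {f : ℝ → ℝ} {a b : ℝ} (hF : ∀ i, MonotoneOn (F i) (Set.Icc a b))
    (hf : ContinuousOn f (Set.Icc a b))
    (hlim : ∀ x ∈ Set.Icc a b, Tendsto (fun i => F i x) l (𝓝 (f x))) :
    TendstoUniformlyOn F f l (Set.Icc a b) := by
  rw [← tendstoLocallyUniformlyOn_iff_tendstoUniformlyOn_of_compact isCompact_Icc,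
    Metric.tendstoLocallyUniformlyOn_iff]
  intro ε hε x hx
  obtain ⟨δ, hδ, hclose⟩ := Metric.continuousOn_iff.1 hf x hx (ε / 3) (by positivity)
  simp only [Real.dist_eq, abs_lt] at hclose ⊢
  let y := max a (x - δ / 2)
  let z := min b (x + δ / 2)
  have hy : y ∈ Set.Icc a b := ⟨le_max_left _ _, max_le (hx.1.trans hx.2) (by linarith [hx.2])⟩
  have hz : z ∈ Set.Icc a b := ⟨le_min (hx.1.trans hx.2) (by linarith [hx.1]), min_le_left _ _⟩
  have hfx {t : ℝ} (ht : t ∈ Set.Icc a b) (hyt : y ≤ t) (htz : t ≤ z) :=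
    hclose t ht ⟨by linarith [le_max_right a (x - δ / 2)], by linarith [min_le_right b (x + δ / 2)]⟩
  have hyz : y ≤ z := (max_le hx.1 (by linarith)).trans (le_min hx.2 (by linarith))
  refine ⟨Set.Icc a b ∩ Set.Ioo (x - δ / 2) (x + δ / 2),
    inter_mem_nhdsWithin _ (Ioo_mem_nhds (by linarith) (by linarith)), ?_⟩
  filter_upwards [(hlim y hy).eventually_const_lt (sub_lt_self _ (by positivity : 0 < ε / 3)),
    (hlim z hz).eventually_lt_const (lt_add_of_pos_right _ (by positivity : 0 < ε / 3))]
    with i hiy hiz t ⟨ht, hxt⟩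
  have hyt : y ≤ t := max_le ht.1 hxt.1.le
  have htz : t ≤ z := le_min ht.2 hxt.2.le
  constructor <;> linarith [hF i hy ht hyt, hF i ht hz htz, hfx ht hyt htz, hfx hy le_rfl hyz,
    hfx hz hyz le_rfl]

/-- The additive convolution, whose generating function is the product of those of `a` and `b`. -/
def addConvolution (a b : ℕ → ℝ) (n : ℕ) : ℝ :=
  ∑ pq ∈ antidiagonal n, a pq.1 * b pq.2

variable {A : ℕ → ℝ} {a b : ℕ → ℝ} {ρ : ℝ}

theorem addConvolution_nonneg (ha : ∀ k, 0 ≤ a k) (hb : ∀ k, 0 ≤ b k) (n : ℕ) :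
    0 ≤ addConvolution a b n :=
  Finset.sum_nonneg fun _ _ => mul_nonneg (ha _) (hb _)

theorem IsRegularlyVarying.tendsto_const_div (hA : IsRegularlyVarying A ρ) (hρ : 0 < ρ)
    (hA0 : ∀ n, 0 ≤ A n) (hmono : Monotone A) (m : ℕ) :
    Tendsto (fun n => A m / A n) atTop (𝓝 0) := by
  have hpow : Tendsto (fun t : ℝ => t ^ ρ) (𝓝[>] 0) (𝓝 0) :=
    ((Real.continuous_rpow_const hρ.le).tendsto' 0 0 (Real.zero_rpow hρ.ne')).mono_left inf_le_left
  refine tendsto_order.2 ⟨fun r hr => .of_forall fun n => hr.trans_le (div_nonneg (hA0 _) (hA0 _)),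
    fun r hr => ?_⟩
  obtain ⟨t, htr, ht : 0 < t⟩ := ((hpow.eventually_lt_const hr).and self_mem_nhdsWithin).exists
  filter_upwards [(hA ht).eventually_lt_const htr,
    (tendsto_floor_mul_natCast ht).eventually_ge_atTop m] with n hn hm
  exact (div_le_div_of_nonneg_right (hmono hm) (hA0 n)).trans_lt hn

theorem IsRegularlyVarying.tendstoUniformlyOn (hA : IsRegularlyVarying A ρ) (hρ : 0 < ρ)
    (hA0 : ∀ n, 0 ≤ A n) (hmono : Monotone A) :
    TendstoUniformlyOn (fun (n : ℕ) (t : ℝ) => A ⌊t * n⌋₊ / A n) (fun t => t ^ ρ) atTop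
      (Set.Icc 0 1) := by
  refine tendstoUniformlyOn_Icc_of_monotoneOn (fun n => Monotone.monotoneOn (fun s t hst => ?_) _)
    (Real.continuous_rpow_const hρ.le).continuousOn fun t ht => ?_
  · exact div_le_div_of_nonneg_right
      (hmono (Nat.floor_le_floor (mul_le_mul_of_nonneg_right hst n.cast_nonneg))) (hA0 n)
  · rcases ht.1.eq_or_lt with rfl | hpos
    · simpa [Real.zero_rpow hρ.ne'] using hA.tendsto_const_div hρ hA0 hmono 0
    · exact hA hpos

theorem partialSum_addConvolution (a b : ℕ → ℝ) (n : ℕ) :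
    partialSum (addConvolution a b) n = ∑ k ∈ Finset.range (n + 1), a k * partialSum b (n - k) := by
  simp only [partialSum, addConvolution, Finset.mul_sum,
    Finset.Nat.sum_antidiagonal_eq_sum_range_succ fun p q => a p * b q, Nat.succ_eq_add_one]
  rw [Finset.sum_range_diag_flip (n + 1) fun p q => a p * b q]
  refine Finset.sum_congr rfl fun k hk => ?_
  rw [Nat.sub_add_comm (Finset.mem_range_succ_iff.1 hk)]

theorem IsRegularlyVarying.eventually_abs_sub_div_sub_lt (hA : IsRegularlyVarying A 1)
    (hA0 : ∀ n, 0 ≤ A n) (hmono : Monotone A) {ε : ℝ} (hε : 0 < ε) :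
    ∀ᶠ n : ℕ in atTop, ∀ k ≤ n, |1 - (k : ℝ) / n - A (n - k) / A n| < ε := by
  filter_upwards [Metric.tendstoUniformlyOn_iff.1 (hA.tendstoUniformlyOn one_pos hA0 hmono) ε hε,
    eventually_gt_atTop 0] with n hn hpos k hk
  have hn0 : (0 : ℝ) < n := Nat.cast_pos.2 hpos
  have hcast : ((n - k : ℕ) : ℝ) / n = 1 - k / n := by
    rw [Nat.cast_sub hk, sub_div, div_self hn0.ne']
  have hlt := hn (((n - k : ℕ) : ℝ) / n) ⟨by positivity,
    div_le_one_of_le₀ (Nat.cast_le.2 (Nat.sub_le n k)) hn0.le⟩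
  rwa [div_mul_cancel₀ _ hn0.ne', Nat.floor_natCast, Real.rpow_one, hcast, Real.dist_eq] at hlt

theorem dist_sum_mul_div_partialSum_le (ha : ∀ k, 0 ≤ a k) {n : ℕ} {u v : ℕ → ℝ} {ε : ℝ}
    (hε : 0 ≤ ε) (huv : ∀ k ≤ n, |u k - v k| ≤ ε) :
    dist ((∑ k ∈ Finset.range (n + 1), u k * a k) / partialSum a n)
      ((∑ k ∈ Finset.range (n + 1), v k * a k) / partialSum a n) ≤ ε := by
  have hA := partialSum_nonneg ha n
  rw [Real.dist_eq, ← sub_div, ← Finset.sum_sub_distrib, abs_div, abs_of_nonneg hA]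
  refine div_le_of_le_mul₀ hA hε ?_
  rw [partialSum, Finset.mul_sum]
  refine (Finset.abs_sum_le_sum_abs _ _).trans (Finset.sum_le_sum fun k hk => ?_)
  rw [← sub_mul, abs_mul, abs_of_nonneg (ha k)]
  exact mul_le_mul_of_nonneg_right (huv k (Finset.mem_range_succ_iff.1 hk)) (ha k)

theorem one_sub_integral_deriv_one_sub_mul_rpow (hρ : -1 < ρ) :
    (1 - 1 : ℝ) - ∫ u in (0 : ℝ)..1, deriv (fun t => 1 - t) u * u ^ ρ = 1 / (ρ + 1) := by
  simp [integral_rpow (.inl hρ), Real.zero_rpow (by linarith : ρ + 1 ≠ 0)]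

theorem tendsto_partialSum_addConvolution_div (ha : ∀ k, 0 ≤ a k) (hb : ∀ k, 0 ≤ b k)
    (hA : IsRegularlyVarying (partialSum a) ρ) (hρ : -1 < ρ)
    (hB : IsRegularlyVarying (partialSum b) 1) :
    Tendsto (fun n => partialSum (addConvolution a b) n / (partialSum a n * partialSum b n)) atTop
      (𝓝 (1 / (ρ + 1))) := by
  rw [← one_sub_integral_deriv_one_sub_mul_rpow hρ]
  refine tendsto_of_tendsto_of_dist
    (hA.tendsto_sum_comp_div_mul ha (f := fun t => 1 - t) (by fun_prop))
    (tendsto_order.2 ⟨fun r hr => .of_forall fun n => hr.trans_le dist_nonneg, fun r hr => ?_⟩)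
  filter_upwards [hB.eventually_abs_sub_div_sub_lt (partialSum_nonneg hb) (monotone_partialSum hb)
    (half_pos hr)] with n hn
  have hconv : partialSum (addConvolution a b) n / (partialSum a n * partialSum b n) =
      (∑ k ∈ Finset.range (n + 1), partialSum b (n - k) / partialSum b n * a k) /
        partialSum a n := by
    rw [partialSum_addConvolution, mul_comm (partialSum a n), ← div_div, Finset.sum_div]
    simp only [div_mul_eq_mul_div, mul_comm (a _)]
  rw [hconv]
  exact (dist_sum_mul_div_partialSum_le ha (half_pos hr).le fun k hk => (hn k hk).le).trans_lt
    (half_lt_self hr)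

end AddConvolution

section OddPrimes

/-- The real-valued indicator of the odd primes. -/
noncomputable def oddPrimeIndicator (p : ℕ) : ℝ := if p.Prime ∧ Odd p then 1 else 0

theorem oddPrimeIndicator_nonneg (p : ℕ) : 0 ≤ oddPrimeIndicator p := by
  unfold oddPrimeIndicator
  positivity

theorem oddPrimeIndicator_eq_sub (p : ℕ) :
    oddPrimeIndicator p = (if p.Prime then 1 else 0) - if p = 2 then 1 else 0 := by
  rcases eq_or_ne p 2 with rfl | hp
  · simp [oddPrimeIndicator, Nat.prime_two]
  · simp only [oddPrimeIndicator, if_neg hp, sub_zero,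
      and_iff_left_of_imp fun h : p.Prime => h.odd_of_ne_two hp]

theorem oddPrimeIndicator_mul (p q : ℕ) : oddPrimeIndicator p * oddPrimeIndicator q =
    if (p.Prime ∧ Odd p) ∧ q.Prime ∧ Odd q then 1 else 0 := by
  rw [oddPrimeIndicator, oddPrimeIndicator, ite_zero_mul_ite_zero, one_mul]

theorem partialSum_oddPrimeIndicator {n : ℕ} (hn : 2 ≤ n) :
    partialSum oddPrimeIndicator n = Nat.primeCounting n - 1 := by
  simp only [partialSum, oddPrimeIndicator_eq_sub, Finset.sum_sub_distrib]
  rw [Finset.sum_ite_eq', if_pos (Finset.mem_range_succ_iff.2 hn), Finset.sum_boole,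
    Nat.primeCounting, Nat.primeCounting', Nat.count_eq_card_filter_range]

theorem tendsto_partialSum_oddPrimeIndicator_div :
    Tendsto (fun n : ℕ => partialSum oddPrimeIndicator n / (n / Real.log n)) atTop (𝓝 1) := by
  have hlog : Tendsto (fun n : ℕ => Real.log n / n) atTop (𝓝 0) :=
    Real.isLittleO_log_id_atTop.tendsto_div_nhds_zero.comp tendsto_natCast_atTop_atTop
  have hlim := tendsto_primeCounting_mul_log_div.sub hlog
  rw [sub_zero] at hlim
  refine hlim.congr' ?_
  filter_upwards [eventually_ge_atTop 2] with n hn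
  rw [partialSum_oddPrimeIndicator hn, div_div_eq_mul_div, sub_one_mul, sub_div]

theorem isRegularlyVarying_partialSum_oddPrimeIndicator :
    IsRegularlyVarying (partialSum oddPrimeIndicator) 1 :=
  .of_tendsto_div (by simpa using isRegularlyVarying_natCast.div isRegularlyVarying_log)
    one_ne_zero tendsto_partialSum_oddPrimeIndicator_div

theorem tendsto_inv_partialSum_oddPrimeIndicator :
    Tendsto (fun n => (partialSum oddPrimeIndicator n)⁻¹) atTop (𝓝 0) := by
  have hone : partialSum oddPrimeIndicator 3 = 1 := by
    rw [partialSum_oddPrimeIndicator (by norm_num), show Nat.primeCounting 3 = 2 by decide]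
    norm_num
  simpa [hone] using isRegularlyVarying_partialSum_oddPrimeIndicator.tendsto_const_div one_pos
    (partialSum_nonneg oddPrimeIndicator_nonneg) (monotone_partialSum oddPrimeIndicator_nonneg) 3

end OddPrimes

section Goldbach

/-- The number of ordered pairs of odd primes with sum `m`. -/
noncomputable def goldbachRep : ℕ → ℝ :=
  addConvolution oddPrimeIndicator oddPrimeIndicator

theorem goldbachRep_nonneg (m : ℕ) : 0 ≤ goldbachRep m :=
  addConvolution_nonneg oddPrimeIndicator_nonneg oddPrimeIndicator_nonneg m

theorem goldbachRep_two_mul_add_one (k : ℕ) : goldbachRep (2 * k + 1) = 0 := by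
  rw [goldbachRep, addConvolution]
  refine Finset.sum_eq_zero fun pq hpq => ?_
  rw [mem_antidiagonal] at hpq
  rw [oddPrimeIndicator_mul, if_neg]
  rintro ⟨⟨-, hp⟩, -, hq⟩
  exact (Nat.not_even_iff_odd.2 ⟨k, rfl⟩) (hpq ▸ hp.add_odd hq)

theorem sum_antidiagonal_two_mul_add {f : ℕ → ℕ → ℝ} (hf : ∀ p q, f p q = f q p) (k : ℕ) :
    (∑ pq ∈ antidiagonal (2 * k), f pq.1 pq.2) + f k k =
      2 * ∑ pq ∈ antidiagonal (2 * k) with pq.1 ≤ pq.2, f pq.1 pq.2 := by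
  have hswap : ∑ pq ∈ antidiagonal (2 * k) with pq.1 ≤ pq.2, f pq.1 pq.2 =
      ∑ pq ∈ antidiagonal (2 * k) with pq.2 ≤ pq.1, f pq.1 pq.2 :=
    Finset.sum_equiv (Equiv.prodComm ℕ ℕ) (by simp [add_comm]) fun pq _ => hf _ _
  have hdiag : (antidiagonal (2 * k)).filter
      (fun pq => pq.1 ≤ pq.2 ∧ pq.2 ≤ pq.1) = {(k, k)} := by
    ext ⟨p, q⟩
    simp only [Finset.mem_filter, mem_antidiagonal, Finset.mem_singleton, Prod.mk.injEq]
    lia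
  rw [two_mul (Finset.sum _ _)]
  nth_rw 2 [hswap]
  rw [← Finset.sum_union_inter, ← Finset.filter_or, ← Finset.filter_and, hdiag,
    Finset.sum_singleton, Finset.filter_true_of_mem fun pq _ => le_total _ _]

theorem cast_Q2 (k : ℕ) :
    (Q2 k : ℝ) = ∑ pq ∈ antidiagonal (2 * k) with pq.1 ≤ pq.2,
      oddPrimeIndicator pq.1 * oddPrimeIndicator pq.2 := by
  simp only [oddPrimeIndicator_mul]
  rw [Finset.sum_boole, Q2, Finset.filter_filter]
  congr 2
  ext ⟨p, q⟩
  simp only [Finset.mem_filter, Finset.mem_product, Finset.mem_range, mem_antidiagonal]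
  grind

theorem two_mul_Q2 (k : ℕ) : 2 * (Q2 k : ℝ) = goldbachRep (2 * k) + oddPrimeIndicator k := by
  have hsq : oddPrimeIndicator k * oddPrimeIndicator k = oddPrimeIndicator k := by
    simp [oddPrimeIndicator]
  rw [cast_Q2,
    ← sum_antidiagonal_two_mul_add (f := fun p q => oddPrimeIndicator p * oddPrimeIndicator q)
      fun p q => mul_comm _ _, hsq]
  rfl

theorem sum_range_two_mul_add_one {f : ℕ → ℝ} (hf : ∀ k, f (2 * k + 1) = 0) (n : ℕ) :
    ∑ m ∈ Finset.range (2 * n + 1), f m = ∑ k ∈ Finset.range (n + 1), f (2 * k) := by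
  induction n with
  | zero => simp
  | succ n ih =>
    rw [Finset.sum_range_succ _ (n + 1), ← ih, show 2 * (n + 1) + 1 = 2 * n + 1 + 1 + 1 by ring,
      Finset.sum_range_succ, Finset.sum_range_succ, hf, add_zero]
    rfl

theorem sum_Icc_three_mul_Q2 (f : ℕ → ℝ) (n : ℕ) :
    ∑ k ∈ Finset.Icc 3 n, f k * Q2 k = ∑ k ∈ Finset.range (n + 1), f k * Q2 k := by
  refine Finset.sum_subset (fun k hk => ?_) fun k _ hk => ?_
  · rw [Finset.mem_range_succ_iff]
    exact (Finset.mem_Icc.1 hk).2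
  · have hk : k < 3 := by grind
    have hQ : Q2 k = 0 := by interval_cases k <;> decide
    rw [hQ, Nat.cast_zero, mul_zero]

theorem tendsto_partialSum_goldbachRep_div :
    Tendsto (fun n => partialSum goldbachRep n /
      (partialSum oddPrimeIndicator n * partialSum oddPrimeIndicator n)) atTop (𝓝 (1 / 2)) := by
  have hlim := tendsto_partialSum_addConvolution_div oddPrimeIndicator_nonneg
    oddPrimeIndicator_nonneg isRegularlyVarying_partialSum_oddPrimeIndicator (by norm_num)
    isRegularlyVarying_partialSum_oddPrimeIndicator
  rwa [one_add_one_eq_two] at hlim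

theorem isRegularlyVarying_partialSum_goldbachRep :
    IsRegularlyVarying (partialSum goldbachRep) 2 := by
  have hsq := isRegularlyVarying_partialSum_oddPrimeIndicator.mul
    isRegularlyVarying_partialSum_oddPrimeIndicator
  rw [one_add_one_eq_two] at hsq
  exact hsq.of_tendsto_div (one_div_ne_zero two_ne_zero) tendsto_partialSum_goldbachRep_div

theorem tendsto_partialSum_oddPrimeIndicator_div_goldbachRep :
    Tendsto (fun n => partialSum oddPrimeIndicator n / partialSum goldbachRep n) atTop (𝓝 0) := by
  have hlim := (tendsto_partialSum_goldbachRep_div.inv₀ (one_div_ne_zero two_ne_zero)).mul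
    tendsto_inv_partialSum_oddPrimeIndicator
  rw [mul_zero] at hlim
  refine hlim.congr' ?_
  filter_upwards [isRegularlyVarying_partialSum_oddPrimeIndicator.eventually_ne_zero] with n hn
  field_simp

theorem tendsto_partialSum_oddPrimeIndicator_div_goldbachRep_two_mul :
    Tendsto (fun n => partialSum oddPrimeIndicator n / partialSum goldbachRep (2 * n)) atTop
      (𝓝 0) := by
  have hE := partialSum_nonneg oddPrimeIndicator_nonneg
  have hS := partialSum_nonneg goldbachRep_nonneg
  refine squeeze_zero (fun n => div_nonneg (hE n) (hS _)) (fun n => ?_)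
    (tendsto_partialSum_oddPrimeIndicator_div_goldbachRep.comp
      (tendsto_id.const_mul_atTop' two_pos))
  exact div_le_div_of_nonneg_right
    (monotone_partialSum oddPrimeIndicator_nonneg (Nat.le_mul_of_pos_left n two_pos)) (hS _)

theorem tendsto_moment_oddPrimeIndicator_div (j : ℕ) :
    Tendsto (fun n : ℕ => (∑ k ∈ Finset.range (n + 1), (k : ℝ) ^ j * oddPrimeIndicator k) /
      ((n : ℝ) ^ j * partialSum goldbachRep (2 * n))) atTop (𝓝 0) := by
  have hlim := (isRegularlyVarying_partialSum_oddPrimeIndicator.tendsto_moment one_pos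
    oddPrimeIndicator_nonneg j).mul tendsto_partialSum_oddPrimeIndicator_div_goldbachRep_two_mul
  rw [mul_zero] at hlim
  refine hlim.congr' ?_
  filter_upwards [isRegularlyVarying_partialSum_oddPrimeIndicator.eventually_ne_zero] with n hn
  field_simp

theorem tendsto_moment_Q2_div (j : ℕ) :
    Tendsto (fun n : ℕ => (∑ k ∈ Finset.Icc 3 n, (k : ℝ) ^ j * Q2 k) /
      ((n : ℝ) ^ j * partialSum goldbachRep (2 * n))) atTop (𝓝 (1 / (2 + j))) := by
  have hrep := (isRegularlyVarying_partialSum_goldbachRep.tendsto_moment two_pos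
    goldbachRep_nonneg j).comp (tendsto_id.const_mul_atTop' two_pos : Tendsto (2 * ·) atTop atTop)
  have hlim := (hrep.add (tendsto_moment_oddPrimeIndicator_div j)).div_const 2
  rw [add_zero, div_right_comm, div_self two_ne_zero] at hlim
  refine hlim.congr fun n => ?_
  have heven : ∑ m ∈ Finset.range (2 * n + 1), (m : ℝ) ^ j * goldbachRep m =
      2 ^ j * ∑ k ∈ Finset.range (n + 1), (k : ℝ) ^ j * goldbachRep (2 * k) := by
    rw [sum_range_two_mul_add_one (fun k => by rw [goldbachRep_two_mul_add_one, mul_zero]),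
      Finset.mul_sum]
    simp only [Nat.cast_mul, Nat.cast_ofNat, mul_pow, mul_assoc]
  have hsum : 2 * ∑ k ∈ Finset.Icc 3 n, (k : ℝ) ^ j * Q2 k =
      (∑ k ∈ Finset.range (n + 1), (k : ℝ) ^ j * goldbachRep (2 * k)) +
        ∑ k ∈ Finset.range (n + 1), (k : ℝ) ^ j * oddPrimeIndicator k := by
    rw [sum_Icc_three_mul_Q2, Finset.mul_sum, ← Finset.sum_add_distrib]
    simp only [← mul_add, ← two_mul_Q2, mul_left_comm]
  rw [eq_div_of_mul_eq two_ne_zero ((mul_comm _ _).trans hsum), Function.comp_apply, heven,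
    Nat.cast_mul, Nat.cast_ofNat, mul_pow, mul_assoc, mul_div_mul_left _ _ (by positivity),
    ← add_div, div_right_comm]

theorem tendsto_moment_Q2_div_sum_Q2 (j : ℕ) :
    Tendsto (fun n : ℕ => (∑ k ∈ Finset.Icc 3 n, (k : ℝ) ^ j * Q2 k) /
      ((n : ℝ) ^ j * ∑ k ∈ Finset.Icc 3 n, (Q2 k : ℝ))) atTop (𝓝 (2 / (2 + j))) := by
  have hlim := (tendsto_moment_Q2_div j).div (tendsto_moment_Q2_div 0) (by norm_num)
  rw [Nat.cast_zero, add_zero, div_div_div_eq, one_mul, mul_one] at hlim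
  refine hlim.congr' ?_
  filter_upwards [(tendsto_id.const_mul_atTop' two_pos).eventually
    isRegularlyVarying_partialSum_goldbachRep.eventually_ne_zero] with n hn
  rw [id_eq] at hn
  simp only [Pi.div_apply, pow_zero, one_mul]
  rw [← div_div, div_div_div_cancel_right₀ hn, div_div]

end Goldbach

/-- `Var(Gₙ)/n² → 1/18`, expressed via the moment sums of `Q2`. -/
theorem variance_goldbach_number :
    Tendsto (fun n : ℕ =>
        (∑ k ∈ Finset.Icc 3 n, (k : ℝ) ^ 2 * (Q2 k : ℝ)) /
            ((n : ℝ) ^ 2 * ∑ k ∈ Finset.Icc 3 n, (Q2 k : ℝ)) -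
          ((∑ k ∈ Finset.Icc 3 n, (k : ℝ) * (Q2 k : ℝ)) /
            ((n : ℝ) * ∑ k ∈ Finset.Icc 3 n, (Q2 k : ℝ))) ^ 2)
      atTop (𝓝 (1 / 18)) := by
  have hlim := (tendsto_moment_Q2_div_sum_Q2 2).sub ((tendsto_moment_Q2_div_sum_Q2 1).pow 2)
  have hconst : (2 / (2 + (2 : ℕ)) - (2 / (2 + (1 : ℕ))) ^ 2 : ℝ) = 1 / 18 := by norm_num
  simpa only [pow_one, hconst] using hlim
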